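/- Let A be a positively graded Noetherian algebra, M ≠ 0 a finitely generated graded A-module, I a graded A-ideal, and set d := min{ μ : there exists p with (I_{≤μ})·I^p·M = I^{p+1}·M }, where I_{≤μ} is the subideal of I generated by the homogeneous elements of I of degree ≤ μ. Then for every t ≥ 0, end( I^t M / A_+ I^t M ) ≥ indeg(M) + t·d. -/

import Mathlib

/-- The irrelevant ideal of a graded ring: the ideal generated by the homogeneous
elements of positive degree. -/
def irrelevantIdeal (A : Type) [CommRing A] (𝒜 : ℤ → AddSubgroup A) : Ideal A :=
  Ideal.span {a : A | ∃ μ > 0, a ∈ 𝒜 μ}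

theorem comp_mem_closure_of_mem_span_smul
    {A : Type} [CommRing A] (𝒜 : ℤ → AddSubgroup A)
    {M : Type} [AddCommGroup M] [Module A M]
    (ℳ : ℤ → AddSubgroup M) [DirectSum.Decomposition ℳ] [SetLike.GradedSMul 𝒜 ℳ]
    (S : Set A) (hS : ∀ s ∈ S, ∃ i, s ∈ 𝒜 i)
    (N : Submodule A M) (hN : ∀ n ∈ N, ∀ μ : ℤ, (DirectSum.decompose ℳ n μ : M) ∈ N)
    (m : M) (hm : m ∈ Ideal.span S • N) (μ : ℤ) :
    (DirectSum.decompose ℳ m μ : M) ∈ AddSubgroup.closure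
      {x : M | ∃ s ∈ S, ∃ i j : ℤ, ∃ n ∈ N, s ∈ 𝒜 i ∧ n ∈ ℳ j ∧ i + j = μ ∧ x = s • n} := by
  classical
  have key : ∀ s ∈ S, ∀ n ∈ N, (DirectSum.decompose ℳ (s • n) μ : M) ∈ AddSubgroup.closure
      {x : M | ∃ s ∈ S, ∃ i j : ℤ, ∃ n ∈ N, s ∈ 𝒜 i ∧ n ∈ ℳ j ∧ i + j = μ ∧ x = s • n} := by
    intro s hs n hn
    obtain ⟨i, hi⟩ := hS s hs
    rw [← DirectSum.sum_support_decompose ℳ n, Finset.smul_sum, DirectSum.decompose_sum,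
      DFinsupp.finsetSum_apply, AddSubgroup.val_finsetSum]
    refine AddSubgroup.sum_mem _ fun j _ => ?_
    have hj : s • (DirectSum.decompose ℳ n j : M) ∈ ℳ (i + j) :=
      SetLike.GradedSMul.smul_mem hi (DirectSum.decompose ℳ n j).2
    by_cases h : i + j = μ
    · subst h
      rw [DirectSum.decompose_of_mem_same ℳ hj]
      exact AddSubgroup.subset_closure
        ⟨s, hs, i, j, _, hN n hn j, hi, (DirectSum.decompose ℳ n j).2, rfl, rfl⟩
    · rw [DirectSum.decompose_of_mem_ne ℳ hj h]
      exact AddSubgroup.zero_mem _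
  have add : ∀ x y : M, (DirectSum.decompose ℳ (x + y) μ : M) =
      DirectSum.decompose ℳ x μ + DirectSum.decompose ℳ y μ := by
    intro x y; simp [DirectSum.decompose_add]
  refine Submodule.smul_induction_on hm ?_ ?_
  · intro a ha n hn
    induction ha using Submodule.span_induction generalizing n with
    | mem s hs => exact key s hs n hn
    | zero => simp [AddSubgroup.zero_mem]
    | add x y _ _ hx hy => rw [add_smul, add]; exact AddSubgroup.add_mem _ (hx n hn) (hy n hn)
    | smul b x _ hx =>
      rw [smul_eq_mul, mul_comm, mul_smul]
      exact hx _ (N.smul_mem b hn)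
  · intro x y hx hy
    rw [add]
    exact AddSubgroup.add_mem _ hx hy

theorem homog_span_smul
    {A : Type} [CommRing A] (𝒜 : ℤ → AddSubgroup A)
    {M : Type} [AddCommGroup M] [Module A M]
    (ℳ : ℤ → AddSubgroup M) [DirectSum.Decomposition ℳ] [SetLike.GradedSMul 𝒜 ℳ]
    (S : Set A) (hS : ∀ s ∈ S, ∃ i, s ∈ 𝒜 i)
    (N : Submodule A M) (hN : ∀ n ∈ N, ∀ μ : ℤ, (DirectSum.decompose ℳ n μ : M) ∈ N)
    (m : M) (hm : m ∈ Ideal.span S • N) (μ : ℤ) :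
    (DirectSum.decompose ℳ m μ : M) ∈ Ideal.span S • N := by
  have h := comp_mem_closure_of_mem_span_smul 𝒜 ℳ S hS N hN m hm μ
  refine (AddSubgroup.closure_le (Ideal.span S • N).toAddSubgroup).2 ?_ h
  rintro x ⟨s, hs, i, j, n, hn, _, _, _, rfl⟩
  exact Submodule.smul_mem_smul (Ideal.subset_span hs) hn

/-- Homogeneous elements of `span S • N` lie in any submodule containing the homogeneous
products of the same degree. -/
theorem homog_mem_of_products
    {A : Type} [CommRing A] (𝒜 : ℤ → AddSubgroup A)
    {M : Type} [AddCommGroup M] [Module A M]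
    (ℳ : ℤ → AddSubgroup M) [DirectSum.Decomposition ℳ] [SetLike.GradedSMul 𝒜 ℳ]
    (S : Set A) (hS : ∀ s ∈ S, ∃ i, s ∈ 𝒜 i)
    (N : Submodule A M) (hN : ∀ n ∈ N, ∀ μ : ℤ, (DirectSum.decompose ℳ n μ : M) ∈ N)
    (m : M) (hm : m ∈ Ideal.span S • N) (μ : ℤ) (hμ : m ∈ ℳ μ) (K : Submodule A M)
    (hK : ∀ s ∈ S, ∀ i j : ℤ, ∀ n ∈ N, s ∈ 𝒜 i → n ∈ ℳ j → i + j = μ → s • n ∈ K) :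
    m ∈ K := by
  have h := comp_mem_closure_of_mem_span_smul 𝒜 ℳ S hS N hN m hm μ
  rw [DirectSum.decompose_of_mem_same ℳ hμ] at h
  refine (AddSubgroup.closure_le K.toAddSubgroup).2 ?_ h
  rintro x ⟨s, hs, i, j, n, hn, h1, h2, h3, rfl⟩
  exact hK s hs i j n hn h1 h2 h3

/-- **Kodiyalam's lemma.**  Let `A` be a positively graded Noetherian algebra
(generated over `A₀` by finitely many homogeneous elements of positive degree),
`M ≠ 0` a finitely generated graded `A`-module, `I` a graded ideal and
`d := min { μ | ∃ p, (I_{≤μ}) I^p M = I^{p+1} M }`.  Then for every `t ≥ 0`,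
`end (I^t M / A₊ I^t M) ≥ indeg M + t d`, i.e. there is a degree
`μ ≥ indeg M + t d` in which the graded module `I^t M / A₊ I^t M` does not vanish. -/
theorem end_quotient_powers_ge_indeg_add_mul
    (A : Type) [CommRing A] [IsNoetherianRing A]
    (𝒜 : ℤ → AddSubgroup A) [GradedRing 𝒜]
    (hneg : ∀ μ : ℤ, μ < 0 → 𝒜 μ = ⊥)
    (hfg : ∃ (n : ℕ) (x : Fin n → A) (w : Fin n → ℤ),
      (∀ i, 0 < w i) ∧ (∀ i, x i ∈ 𝒜 (w i)) ∧
      Ideal.span (Set.range x) = irrelevantIdeal A 𝒜)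
    (M : Type) [AddCommGroup M] [Module A M] [Module.Finite A M]
    (ℳ : ℤ → AddSubgroup M) [DirectSum.Decomposition ℳ] [SetLike.GradedSMul 𝒜 ℳ]
    (m0 : ℤ) (hm0 : IsLeast {μ : ℤ | ℳ μ ≠ ⊥} m0)
    (I : Ideal A) (hI : ∀ a ∈ I, ∀ μ : ℤ, (DirectSum.decompose 𝒜 a μ : A) ∈ I)
    (d : ℤ)
    (hd : IsLeast {μ : ℤ | ∃ p : ℕ,
      (Ideal.span {a : A | a ∈ I ∧ ∃ ν ≤ μ, a ∈ 𝒜 ν}) • (I ^ p • (⊤ : Submodule A M))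
        = I ^ (p + 1) • (⊤ : Submodule A M)} d) :
    ∀ t : ℕ, ∃ μ : ℤ, m0 + t * d ≤ μ ∧
      ∃ m : M, m ∈ ℳ μ ∧ m ∈ (I ^ t • (⊤ : Submodule A M)) ∧
        m ∉ (irrelevantIdeal A 𝒜) • (I ^ t • (⊤ : Submodule A M)) := by
  classical
  intro t
  by_contra! hcon
  obtain ⟨hm0ne, hm0le⟩ := hm0
  have hlow : ∀ j < m0, ∀ n ∈ ℳ j, n = 0 := by
    intro j hj n hn
    by_contra hne
    have : m0 ≤ j := hm0le (by
      intro hbot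
      rw [hbot] at hn
      exact hne (AddSubgroup.mem_bot.1 hn))
    omega
  set S : Set A := {a : A | a ∈ I ∧ ∃ i, a ∈ 𝒜 i} with hSdef
  have hS : ∀ s ∈ S, ∃ i, s ∈ 𝒜 i := fun s hs => hs.2
  have hIS : Ideal.span S = I := by
    apply le_antisymm
    · exact Ideal.span_le.2 fun s hs => hs.1
    · intro a ha
      rw [← DirectSum.sum_support_decompose 𝒜 a]
      exact Ideal.sum_mem _ fun i _ =>
        Ideal.subset_span ⟨hI a ha i, i, (DirectSum.decompose 𝒜 a i).2⟩
  have hpow : ∀ t : ℕ, I ^ (t + 1) • (⊤ : Submodule A M) =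
      Ideal.span S • (I ^ t • (⊤ : Submodule A M)) := by
    intro t
    rw [hIS, pow_succ', Submodule.mul_smul]
  have hhom : ∀ t : ℕ, ∀ n ∈ I ^ t • (⊤ : Submodule A M), ∀ μ : ℤ,
      (DirectSum.decompose ℳ n μ : M) ∈ I ^ t • (⊤ : Submodule A M) := by
    intro t
    induction t with
    | zero => intro n _ μ; simp
    | succ t ih =>
      rw [hpow]
      exact homog_span_smul 𝒜 ℳ S hS _ ih
  set J : Ideal A := Ideal.span {a : A | a ∈ I ∧ ∃ ν ≤ d - 1, a ∈ 𝒜 ν} with hJ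
  have hJI : J ≤ I := Ideal.span_le.2 fun s hs => hs.1
  have step : ∀ t : ℕ, ∀ j : ℤ, j < m0 + (t + 1 : ℕ) * d →
      ∀ n ∈ I ^ (t + 1) • (⊤ : Submodule A M), n ∈ ℳ j →
      n ∈ J • (I ^ t • (⊤ : Submodule A M)) := by
    intro t
    induction t with
    | zero =>
      intro μ hμ m hm hmμ
      rw [hpow] at hm
      refine homog_mem_of_products 𝒜 ℳ S hS _ (hhom 0) m hm μ hmμ _ ?_
      intro s hs i j n hn hsi hnj hij
      by_cases hi : i ≤ d - 1
      · exact Submodule.smul_mem_smul (Ideal.subset_span ⟨hs.1, i, hi, hsi⟩) hn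
      · have : n = 0 := hlow j (by push_cast at hμ; linarith) n hnj
        rw [this, smul_zero]
        exact Submodule.zero_mem _
    | succ t ih =>
      intro μ hμ m hm hmμ
      rw [hpow] at hm
      refine homog_mem_of_products 𝒜 ℳ S hS _ (hhom (t + 1)) m hm μ hmμ _ ?_
      intro s hs i j n hn hsi hnj hij
      by_cases hi : i ≤ d - 1
      · exact Submodule.smul_mem_smul (Ideal.subset_span ⟨hs.1, i, hi, hsi⟩) hn
      · have h1 := ih j (by push_cast at hμ ⊢; linarith) n hn hnj
        have h2 : s • n ∈ I • (J • (I ^ t • (⊤ : Submodule A M))) :=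
          Submodule.smul_mem_smul hs.1 h1
        rwa [← Submodule.mul_smul, mul_comm, Submodule.mul_smul, ← Submodule.mul_smul I,
          ← pow_succ'] at h2
  have nak : ∀ K : Submodule A M,
      (∀ j : ℤ, j < m0 + (t : ℤ) * d → ∀ n ∈ I ^ t • (⊤ : Submodule A M), n ∈ ℳ j → n ∈ K) →
      I ^ t • (⊤ : Submodule A M) ≤ K := by
    intro K hK
    have hk : ∀ k : ℕ, ∀ μ : ℤ, μ < m0 + k →
        ∀ m ∈ I ^ t • (⊤ : Submodule A M), m ∈ ℳ μ → m ∈ K := by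
      intro k
      induction k with
      | zero =>
        intro μ hμ m _ hmμ
        rw [hlow μ (by simpa using hμ) m hmμ]
        exact K.zero_mem
      | succ k ih =>
        intro μ hμ m hm hmμ
        by_cases h : μ < m0 + (t : ℤ) * d
        · exact hK μ h m hm hmμ
        · have h1 := hcon μ (not_lt.1 h) m hmμ hm
          unfold irrelevantIdeal at h1
          refine homog_mem_of_products 𝒜 ℳ _ ?_ _ (hhom t) m h1 μ hmμ _ ?_
          · rintro s ⟨i, _, hi⟩
            exact ⟨i, hi⟩
          · rintro s ⟨i', hi', hsi'⟩ i j n hn hsi hnj hij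
            by_cases hs0 : s = 0
            · rw [hs0, zero_smul]; exact K.zero_mem
            · have : i' = i := DirectSum.degree_eq_of_mem_mem 𝒜 hsi' hsi hs0
              exact K.smul_mem s (ih j (by push_cast at hμ; omega) n hn hnj)
    intro m hm
    rw [← DirectSum.sum_support_decompose ℳ m]
    refine Submodule.sum_mem _ fun j _ => ?_
    exact hk (j - m0 + 1).toNat j (by omega) _ (hhom t m hm j) (DirectSum.decompose ℳ m j).2
  cases t with
  | zero =>
    have h := nak ⊥ (fun j hj n _ hn => by
      rw [hlow j (by simpa using hj) n hn]; exact Submodule.zero_mem _)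
    apply hm0ne
    rw [eq_bot_iff]
    intro x _
    have : x ∈ (⊥ : Submodule A M) := h (by simp)
    simpa using this
  | succ t =>
    have h := nak _ (step t)
    have : d ≤ d - 1 := hd.2 ⟨t, le_antisymm (by
      rw [pow_succ', Submodule.mul_smul]
      exact Submodule.smul_mono_left hJI) h⟩
    omega
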